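/- Lower bound on the number of flexes (Proposition 1): For every constant C > 0 there exist a constant c > 0 and T₀ ∈ ℕ (depending only on C, N and q) such that for every horizon T ≥ T₀ and every policy π for horizon T — where the flexing decisions ω(t) ∈ {0,1} and, for each flexed flex ball, the chosen bin within its flex set F_t are allowed to be arbitrary measurable functions of the entire realization (θ_1,…,θ_T) — if E[Gap^π(T)] ≤ C then E[M^π] ≥ c·√T. -/

import Mathlib

/-!
Let `S` be the centred number of balls whose preferred bin is a fixed bin `i₀`. Each flexed ball
removes at most one ball from `i₀`, so the final load of `i₀` is at least its preferred count
minus `M`; since the maximum load is also at least the average, `Gap + M ≥ max S 0` on every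
realization, whatever the policy knows (`centred_le_gap_add_flex`, `gap_add_flex_nonneg`).

`S` is a sum of `T` i.i.d. centred bounded variables, so `E S = 0`, `E S² = σ² T` and
`E S⁴ ≤ 3 T²` (`seqE_moments`). The pointwise bound
`max s 0 ≥ (s + s² / a - s⁴ / a³) / 2` with `a` of order `√T` turns these moments into
`E[max S 0] ≥ const · √T`. Hence `C + E M ≥ const · √T`, and the constant `C` is absorbed for
large `T`.
-/

attribute [local instance] Classical.propDecidable

/-- An arrival type: (is-flex-ball, preferred bin, flex set). -/
abbrev Arrival (N : ℕ) := Bool × Fin N × Finset (Fin N)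

/-- Mass of a single arrival: `f ~ Bernoulli(q)`, `p` uniform on `Fin N`,
`F` uniform on the 2-element subsets of `Fin N`, mutually independent. -/
noncomputable def arrivalProb (N : ℕ) (q : ℝ) (a : Arrival N) : ℝ :=
  (if a.1 then q else 1 - q) * (1 / (N : ℝ)) *
    (if a.2.2.card = 2 then 1 / (N.choose 2 : ℝ) else 0)

/-- Mass of a sequence of `T` i.i.d. arrivals. -/
noncomputable def seqMass (N T : ℕ) (q : ℝ) (xs : Fin T → Arrival N) : ℝ :=
  ∏ t, arrivalProb N q (xs t)

/-- Expectation of a real random variable on the canonical space of `T` arrivals. -/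
noncomputable def expec (N T : ℕ) (q : ℝ) (X : (Fin T → Arrival N) → ℝ) : ℝ :=
  ∑ xs : Fin T → Arrival N, seqMass N T q xs * X xs

/-- Probability of an event on the canonical space of `T` arrivals. -/
noncomputable def prob (N T : ℕ) (q : ℝ) (A : (Fin T → Arrival N) → Prop) : ℝ :=
  ∑ xs : Fin T → Arrival N, if A xs then seqMass N T q xs else 0

/-- The least-loaded bin in `F` (ties broken in favor of the smallest index). -/
noncomputable def argminBin {N : ℕ} [NeZero N] (x : Fin N → ℕ) (F : Finset (Fin N)) : Fin N :=
  if hF : (F.filter fun i => ∀ j ∈ F, x i ≤ x j).Nonempty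
  then (F.filter fun i => ∀ j ∈ F, x i ≤ x j).min' hF
  else 0

/-- One step of the greedy (least-loaded) allocation: if the ball is a flex ball and
flexing is exerted, it goes to the least-loaded bin of its flex set (lexicographic
tie-breaking); otherwise it goes to its preferred bin. -/
noncomputable def greedyStep {N : ℕ} [NeZero N] (flex : Bool) (a : Arrival N)
    (x : Fin N → ℕ) : Fin N → ℕ :=
  fun i => if i = (if a.1 && flex then argminBin x a.2.2 else a.2.1) then x i + 1 else x i

/-- Load process under a flexing rule `dec` (which may depend on the whole realization,
the time, and the current loads), with greedy placement of flexed flex balls. -/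
noncomputable def greedyLoads {N T : ℕ} [NeZero N]
    (dec : (Fin T → Arrival N) → ℕ → (Fin N → ℕ) → Bool)
    (xs : Fin T → Arrival N) : ℕ → Fin N → ℕ
  | 0 => fun _ => 0
  | t + 1 =>
    if h : t < T then
      greedyStep (dec xs t (greedyLoads dec xs t)) (xs ⟨t, h⟩) (greedyLoads dec xs t)
    else greedyLoads dec xs t

/-- The maximum load over all bins. -/
noncomputable def maxLoad {N : ℕ} (x : Fin N → ℕ) : ℕ := Finset.univ.sup x

/-- `Gap(t)` : maximum load minus the average load `t/N`. -/
noncomputable def gap {N : ℕ} (x : Fin N → ℕ) (t : ℕ) : ℝ :=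
  (maxLoad x : ℝ) - (t : ℝ) / (N : ℝ)

/-- Number of flexed balls `M = ∑_t f_t ω(t)`. -/
noncomputable def numFlexed {N T : ℕ} [NeZero N]
    (dec : (Fin T → Arrival N) → ℕ → (Fin N → ℕ) → Bool) (xs : Fin T → Arrival N) : ℕ :=
  ∑ t : Fin T, if (xs t).1 && dec xs (t : ℕ) (greedyLoads dec xs (t : ℕ)) then 1 else 0

/-- Flexing rule of a "static"-type policy: flex exactly from period
`T - c·√(T log T)` on (ball `t` corresponds to step index `t-1`). -/
noncomputable def lateDec (N T : ℕ) (c : ℝ) :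
    (Fin T → Arrival N) → ℕ → (Fin N → ℕ) → Bool :=
  fun _ s _ =>
    if (T : ℝ) - c * Real.sqrt ((T : ℝ) * Real.log (T : ℝ)) ≤ ((s : ℝ) + 1) then true else false

/-- Flexing rule of the dynamic policy: flex at period `t = s+1` iff the current gap
`Gap(t-1)` is at least `a_d (T - t) q / N` with `a_d = 1/(5 C(N,2))`. -/
noncomputable def dynDec (N T : ℕ) (q : ℝ) :
    (Fin T → Arrival N) → ℕ → (Fin N → ℕ) → Bool :=
  fun _ s x =>
    if (1 / (5 * (N.choose 2 : ℝ))) * ((T : ℝ) - ((s : ℝ) + 1)) * q / (N : ℝ) ≤ gap x s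
    then true else false

/-- First time (within horizon `T`) at which the maximum load equals `S`. -/
noncomputable def hitTime {N : ℕ} (T S : ℕ) (x : ℕ → Fin N → ℕ) : ℕ :=
  if h : ((Finset.range (T + 1)).filter fun t => maxLoad (x t) = S).Nonempty
  then ((Finset.range (T + 1)).filter fun t => maxLoad (x t) = S).min' h
  else T

/-- The dynamic opaque policy: the flag records whether the trigger condition
`Gap(t) ≥ c_d (T-t) q / N` (with `c_d = 1/(10 C(N,2))`) has held at some time `≤ t`;
from then on every flex ball is flexed (greedy placement). Returns (flag, loads). -/
noncomputable def dynOpaque (N T : ℕ) [NeZero N] (q : ℝ) (xs : Fin T → Arrival N) :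
    ℕ → Bool × (Fin N → ℕ)
  | 0 =>
    (if (1 / (10 * (N.choose 2 : ℝ))) * (T : ℝ) * q / (N : ℝ) ≤ 0 then true else false,
      fun _ => 0)
  | t + 1 =>
    let p := dynOpaque N T q xs t
    let x' := if h : t < T then greedyStep p.1 (xs ⟨t, h⟩) p.2 else p.2
    (p.1 ||
      (if (1 / (10 * (N.choose 2 : ℝ))) * ((T : ℝ) - ((t : ℝ) + 1)) * q / (N : ℝ) ≤
          gap x' (t + 1)
       then true else false),
     x')

/-- Number of flexed balls `D = ∑_{t=1}^{R} f_t ω(t)` during one replenishment cycle,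
for a policy given by the flexing rule `dec`. -/
noncomputable def cycleFlexCount (N T : ℕ) [NeZero N]
    (dec : (Fin T → Arrival N) → ℕ → (Fin N → ℕ) → Bool) (S : ℕ)
    (xs : Fin T → Arrival N) : ℕ :=
  ∑ t ∈ Finset.range (hitTime T S (greedyLoads dec xs)),
    if h : t < T then (if (xs ⟨t, h⟩).1 && dec xs t (greedyLoads dec xs t) then 1 else 0)
    else 0

/-- Number of flexed balls during one replenishment cycle of the dynamic opaque policy. -/
noncomputable def dynFlexCount (N T : ℕ) [NeZero N] (q : ℝ) (S : ℕ)
    (xs : Fin T → Arrival N) : ℕ :=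
  ∑ t ∈ Finset.range (hitTime T S fun u => (dynOpaque N T q xs u).2),
    if h : t < T then (if (xs ⟨t, h⟩).1 && (dynOpaque N T q xs t).1 then 1 else 0) else 0

/-- Load process of a general policy: the flexing decision `dec` and the chosen bin `ch`
may be arbitrary functions of the entire realization. -/
noncomputable def polLoads {N T : ℕ}
    (dec : (Fin T → Arrival N) → Fin T → Bool)
    (ch : (Fin T → Arrival N) → Fin T → Fin N)
    (xs : Fin T → Arrival N) : ℕ → Fin N → ℕ
  | 0 => fun _ => 0
  | t + 1 =>
    let x := polLoads dec ch xs t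
    if h : t < T then
      fun i =>
        if i = (if (xs ⟨t, h⟩).1 && dec xs ⟨t, h⟩ then ch xs ⟨t, h⟩ else (xs ⟨t, h⟩).2.1)
        then x i + 1 else x i
    else x

/-- Number of flexed balls `M^π = ∑_t f_t ω(t)` of a general policy. -/
noncomputable def polFlexCount {N T : ℕ}
    (dec : (Fin T → Arrival N) → Fin T → Bool) (xs : Fin T → Arrival N) : ℕ :=
  ∑ t : Fin T, if (xs t).1 && dec xs t then 1 else 0

/-! ### Moments of sums of i.i.d. variables -/

section Moments

variable {α : Type*} [Fintype α]

/-- Expectation of `X` under the `T`-fold product of the weight `w`. -/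
noncomputable def seqE (w : α → ℝ) (T : ℕ) (X : (Fin T → α) → ℝ) : ℝ :=
  ∑ xs : Fin T → α, (∏ t, w (xs t)) * X xs

lemma seqE_succ (w : α → ℝ) (Y : α → ℝ) (g : ℝ → ℝ) (T : ℕ) :
    seqE w (T + 1) (fun xs => g (∑ t, Y (xs t))) =
      ∑ a, w a * seqE w T (fun xs => g (Y a + ∑ t, Y (xs t))) := by
  unfold seqE
  rw [← (Fin.consEquiv (fun _ : Fin (T + 1) => α)).sum_comp, Fintype.sum_prod_type]
  refine Finset.sum_congr rfl fun a _ => ?_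
  rw [Finset.mul_sum]
  refine Finset.sum_congr rfl fun xs _ => ?_
  simp [Fin.consEquiv, Fin.prod_univ_succ, Fin.sum_univ_succ, mul_assoc]

lemma seqE_add (w : α → ℝ) (T : ℕ) (X Y : (Fin T → α) → ℝ) :
    seqE w T (fun xs => X xs + Y xs) = seqE w T X + seqE w T Y := by
  simp [seqE, mul_add, Finset.sum_add_distrib]

lemma seqE_const_mul (w : α → ℝ) (T : ℕ) (c : ℝ) (X : (Fin T → α) → ℝ) :
    seqE w T (fun xs => c * X xs) = c * seqE w T X := by
  simp only [seqE, Finset.mul_sum]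
  exact Finset.sum_congr rfl fun _ _ => by ring

lemma seqE_mono (w : α → ℝ) (hw : ∀ a, 0 ≤ w a) (T : ℕ) {X Y : (Fin T → α) → ℝ}
    (h : ∀ xs, X xs ≤ Y xs) : seqE w T X ≤ seqE w T Y :=
  Finset.sum_le_sum fun xs _ =>
    mul_le_mul_of_nonneg_left (h xs) (Finset.prod_nonneg fun _ _ => hw _)

/-- The first, second and fourth moments of a sum of `T` i.i.d. centred variables. The third
moment never enters: in the recursion for the fourth it is multiplied by the mean of `Y`. -/
lemma seqE_moments (w Y : α → ℝ) (v : ℝ) (h0 : ∑ a, w a = 1) (h1 : ∑ a, w a * Y a = 0)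
    (h2 : ∑ a, w a * Y a ^ 2 = v) (hv : 0 ≤ v) (hv1 : v ≤ 1) (h4 : ∑ a, w a * Y a ^ 4 ≤ 1)
    (T : ℕ) :
    seqE w T (fun _ => 1) = 1 ∧
    seqE w T (fun xs => ∑ t, Y (xs t)) = 0 ∧
    seqE w T (fun xs => (∑ t, Y (xs t)) ^ 2) = v * T ∧
    seqE w T (fun xs => (∑ t, Y (xs t)) ^ 4) ≤ 3 * (T : ℝ) ^ 2 := by
  induction T with
  | zero => simp [seqE]
  | succ T ih =>
    obtain ⟨e0, e1, e2, e4⟩ := ih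
    set S : (Fin T → α) → ℝ := fun xs => ∑ t, Y (xs t) with hS
    have e2' : seqE w T (fun xs => S xs ^ 2) = v * T := e2
    have e4' : seqE w T (fun xs => S xs ^ 4) ≤ 3 * (T : ℝ) ^ 2 := e4
    refine ⟨?_, ?_, ?_, ?_⟩
    · have := seqE_succ w Y (fun _ => 1) T
      simp only [e0, mul_one, h0] at this
      exact this
    · rw [seqE_succ w Y (fun s => s) T]
      have : ∀ a, seqE w T (fun xs => Y a + S xs) = Y a := by
        intro a
        have : (fun xs => Y a + S xs) = fun xs => Y a * 1 + S xs := by simp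
        rw [this, seqE_add, seqE_const_mul, e0, e1]; ring
      simp only [hS] at this
      simp only [this, h1]
    · rw [seqE_succ w Y (fun s => s ^ 2) T]
      have : ∀ a, seqE w T (fun xs => (Y a + S xs) ^ 2) = Y a ^ 2 + v * T := by
        intro a
        have : (fun xs => (Y a + S xs) ^ 2) =
            fun xs => Y a ^ 2 * 1 + (2 * Y a * S xs + S xs ^ 2) := by funext; ring
        rw [this, seqE_add, seqE_const_mul, seqE_add, seqE_const_mul, e0, e1, e2']; ring
      simp only [hS] at this
      simp only [this, mul_add, Finset.sum_add_distrib, h2, ← Finset.sum_mul, h0]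
      push_cast; ring
    · rw [seqE_succ w Y (fun s => s ^ 4) T]
      have : ∀ a, seqE w T (fun xs => (Y a + S xs) ^ 4) = Y a ^ 4 +
          (Y a ^ 2 * (6 * (v * T)) + (Y a * (4 * seqE w T (fun xs => S xs ^ 3)) +
            seqE w T (fun xs => S xs ^ 4))) := by
        intro a
        have : (fun xs => (Y a + S xs) ^ 4) =
            fun xs => Y a ^ 4 * 1 + (4 * Y a ^ 3 * S xs + (6 * Y a ^ 2 * S xs ^ 2 +
              (4 * Y a * S xs ^ 3 + S xs ^ 4))) := by funext; ring
        rw [this, seqE_add, seqE_const_mul, seqE_add, seqE_const_mul, seqE_add, seqE_const_mul,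
          seqE_add, seqE_const_mul, e0, e1, e2']; ring
      simp only [hS] at this e4'
      simp only [this, mul_add, Finset.sum_add_distrib, ← mul_assoc, ← Finset.sum_mul, h0, h1, h2]
      have hvv : v * v ≤ 1 := by nlinarith
      have hT : (0 : ℝ) ≤ T := Nat.cast_nonneg T
      have := mul_le_mul_of_nonneg_right hvv hT
      push_cast
      nlinarith

end Moments

/-! ### A single arrival -/

lemma arrivalProb_nonneg (N : ℕ) (q : ℝ) (hq0 : 0 < q) (hq1 : q ≤ 1) (a : Arrival N) :
    0 ≤ arrivalProb N q a := by
  unfold arrivalProb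
  have : 0 ≤ 1 - q := by linarith
  split_ifs <;> positivity

/-- The preferred bin of an arrival is uniform. -/
lemma sum_arrivalProb_mul (N : ℕ) (hN : 2 ≤ N) (q : ℝ) (h : Fin N → ℝ) :
    ∑ a : Arrival N, arrivalProb N q a * h a.2.1 = (1 / (N : ℝ)) * ∑ p, h p := by
  have hF : ∑ F : Finset (Fin N), (if F.card = 2 then 1 / (N.choose 2 : ℝ) else 0) = 1 := by
    rw [← Finset.sum_filter, Finset.sum_const]
    have hc : (Finset.univ.filter fun F : Finset (Fin N) => F.card = 2).card = N.choose 2 := by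
      rw [Finset.univ_filter_card_eq, Finset.card_powersetCard, Finset.card_univ, Fintype.card_fin]
    have hne : (N.choose 2 : ℝ) ≠ 0 := by
      exact_mod_cast (Nat.choose_pos hN).ne'
    rw [nsmul_eq_mul]
    refine Eq.trans ?_ (mul_one_div_cancel hne)
    congr 1
    exact_mod_cast hc
  have key : ∀ (b : Bool) (p : Fin N),
      ∑ F : Finset (Fin N), arrivalProb N q (b, p, F) * h p =
        (if b then q else 1 - q) * (1 / (N : ℝ)) * h p := by
    intro b p
    rw [← Finset.sum_mul]
    refine congrArg (· * h p) ?_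
    refine Eq.trans ?_ ((congrArg (((if b then q else 1 - q) * (1 / (N : ℝ))) * ·) hF).trans
      (mul_one _))
    simp only [Finset.mul_sum]
    refine Finset.sum_congr rfl fun F _ => ?_
    simp only [arrivalProb]
  simp only [Fintype.sum_prod_type, key]
  simp only [Fintype.sum_bool, Finset.mul_sum, if_true, Bool.false_eq_true, if_false]
  rw [← Finset.sum_add_distrib]
  exact Finset.sum_congr rfl fun _ _ => by ring

/-- Centred indicator that the preferred bin of the arrival is `i₀`. -/
noncomputable def centred {N : ℕ} (i₀ : Fin N) (a : Arrival N) : ℝ :=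
  (if a.2.1 = i₀ then 1 else 0) - 1 / (N : ℝ)

lemma centred_moments (N : ℕ) (hN : 2 ≤ N) (q : ℝ) (hq0 : 0 < q) (hq1 : q ≤ 1) (i₀ : Fin N) :
    ∑ a, arrivalProb N q a = 1 ∧
    ∑ a, arrivalProb N q a * centred i₀ a = 0 ∧
    ∑ a, arrivalProb N q a * centred i₀ a ^ 2 = (1 / (N : ℝ)) * (1 - 1 / (N : ℝ)) ∧
    ∑ a, arrivalProb N q a * centred i₀ a ^ 4 ≤ 1 := by
  have hN' : (2 : ℝ) ≤ N := by exact_mod_cast hN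
  have hNne : (N : ℝ) ≠ 0 := by positivity
  have hinv : (1 / (N : ℝ)) ≤ 1 := by
    rw [div_le_one (by linarith)]; linarith
  have hinv0 : 0 ≤ (1 / (N : ℝ)) := by positivity
  have h0 : ∑ a, arrivalProb N q a = 1 := by
    have := sum_arrivalProb_mul N hN q (fun _ => 1)
    simp only [mul_one] at this
    rw [this]; simp [hNne]
  refine ⟨h0, ?_, ?_, ?_⟩
  · have := sum_arrivalProb_mul N hN q (fun p => (if p = i₀ then 1 else 0) - 1 / (N : ℝ))
    simp only [centred]
    rw [this, Finset.sum_sub_distrib]; simp [hNne]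
  · have := sum_arrivalProb_mul N hN q (fun p => ((if p = i₀ then 1 else 0) - 1 / (N : ℝ)) ^ 2)
    simp only [centred]
    rw [this]
    have e : ∀ p : Fin N, ((if p = i₀ then (1 : ℝ) else 0) - 1 / (N : ℝ)) ^ 2 =
        (if p = i₀ then (1 - 2 / (N : ℝ)) else 0) + (1 / (N : ℝ)) ^ 2 := by
      intro p
      split_ifs <;> ring
    simp only [e, Finset.sum_add_distrib]
    simp only [Finset.sum_ite_eq', Finset.mem_univ, if_true, Finset.sum_const, Finset.card_univ,
      Fintype.card_fin, nsmul_eq_mul]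
    field_simp
    ring
  · rw [← h0]
    refine Finset.sum_le_sum fun a _ => mul_le_of_le_one_right (arrivalProb_nonneg N q hq0 hq1 a) ?_
    have habs : |centred i₀ a| ≤ 1 := by
      unfold centred
      rw [abs_le]
      split_ifs <;> constructor <;> linarith
    calc centred i₀ a ^ 4 = |centred i₀ a| ^ 4 := (Even.pow_abs (by decide) _).symm
      _ ≤ 1 := pow_le_one₀ (abs_nonneg _) habs

/-! ### Pathwise bounds for an arbitrary policy -/

/-- The bin receiving ball `t`. -/
noncomputable def polBin {N T : ℕ} (dec : (Fin T → Arrival N) → Fin T → Bool)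
    (ch : (Fin T → Arrival N) → Fin T → Fin N) (xs : Fin T → Arrival N) (t : Fin T) : Fin N :=
  if (xs t).1 && dec xs t then ch xs t else (xs t).2.1

lemma polLoads_eq {N T : ℕ} (dec : (Fin T → Arrival N) → Fin T → Bool)
    (ch : (Fin T → Arrival N) → Fin T → Fin N) (xs : Fin T → Arrival N) (i : Fin N) :
    polLoads dec ch xs T i = ∑ t, if i = polBin dec ch xs t then 1 else 0 := by
  have key : ∀ t ≤ T, polLoads dec ch xs t i =
      ∑ s ∈ Finset.univ.filter (fun s : Fin T => s.val < t),
        if i = polBin dec ch xs s then 1 else 0 := by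
    intro t
    induction t with
    | zero => intro _; simp [polLoads]
    | succ t ih =>
      intro ht
      have ht' : t < T := ht
      have hset : Finset.univ.filter (fun s : Fin T => s.val < t + 1) =
          insert ⟨t, ht'⟩ (Finset.univ.filter (fun s : Fin T => s.val < t)) := by
        ext s; simp [Fin.ext_iff]; omega
      rw [hset, Finset.sum_insert (by simp), ← ih ht'.le]
      simp only [polLoads, ht', dif_pos, polBin]
      split_ifs <;> omega
  rw [key T le_rfl]
  simp

lemma centred_le_gap_add_flex {N T : ℕ} (dec : (Fin T → Arrival N) → Fin T → Bool)
    (ch : (Fin T → Arrival N) → Fin T → Fin N) (xs : Fin T → Arrival N) (i₀ : Fin N) :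
    ∑ t, centred i₀ (xs t) ≤ gap (polLoads dec ch xs T) T + (polFlexCount dec xs : ℝ) := by
  have h1 : polLoads dec ch xs T i₀ ≤ maxLoad (polLoads dec ch xs T) :=
    Finset.le_sup (f := polLoads dec ch xs T) (Finset.mem_univ i₀)
  have h2 : (∑ t, if (xs t).2.1 = i₀ then 1 else 0) ≤
      polLoads dec ch xs T i₀ + polFlexCount dec xs := by
    rw [polLoads_eq, polFlexCount, ← Finset.sum_add_distrib]
    refine Finset.sum_le_sum fun t _ => ?_
    unfold polBin
    by_cases hf : ((xs t).1 && dec xs t) = true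
    · simp only [hf, if_true]; split_ifs <;> omega
    · simp only [hf]; simp [eq_comm]
  have h3 : (((∑ t, if (xs t).2.1 = i₀ then 1 else 0 : ℕ)) : ℝ) ≤
      (maxLoad (polLoads dec ch xs T) : ℝ) + (polFlexCount dec xs : ℝ) := by
    exact_mod_cast h2.trans (by omega)
  push_cast at h3
  simp only [centred, Finset.sum_sub_distrib, gap]
  simp only [Finset.sum_const, Finset.card_univ, Fintype.card_fin, nsmul_eq_mul, mul_one_div]
  linarith

lemma gap_add_flex_nonneg {N T : ℕ} (hN : 2 ≤ N) (dec : (Fin T → Arrival N) → Fin T → Bool)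
    (ch : (Fin T → Arrival N) → Fin T → Fin N) (xs : Fin T → Arrival N) :
    0 ≤ gap (polLoads dec ch xs T) T + (polFlexCount dec xs : ℝ) := by
  have hsum : ∑ i, polLoads dec ch xs T i = T := by
    simp only [polLoads_eq]
    rw [Finset.sum_comm]
    simp
  have hle : T ≤ N * maxLoad (polLoads dec ch xs T) := by
    calc T = ∑ i, polLoads dec ch xs T i := hsum.symm
      _ ≤ ∑ _i : Fin N, maxLoad (polLoads dec ch xs T) :=
        Finset.sum_le_sum fun i _ => Finset.le_sup (f := polLoads dec ch xs T) (Finset.mem_univ i)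
      _ = N * maxLoad (polLoads dec ch xs T) := by simp
  have hle' : (T : ℝ) ≤ N * (maxLoad (polLoads dec ch xs T) : ℝ) := by exact_mod_cast hle
  have hN' : (0 : ℝ) < N := by positivity
  have : (T : ℝ) / N ≤ maxLoad (polLoads dec ch xs T) := by
    rw [div_le_iff₀ hN']; linarith
  unfold gap
  have : (0 : ℝ) ≤ polFlexCount dec xs := Nat.cast_nonneg _
  linarith

/-- Lower bound for the positive part of `s` by a polynomial in `s`: with `u = |s| / a` it
reduces to `u ^ 2 - u ^ 4 ≤ u`. -/
lemma poly_le_of_le {s g a : ℝ} (ha : 0 < a) (hs : s ≤ g) (hg : 0 ≤ g) :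
    2⁻¹ * s + (2⁻¹ / a * s ^ 2 + (-(2⁻¹ / a ^ 3)) * s ^ 4) ≤ g := by
  have hu : ∀ u : ℝ, 0 ≤ u → u ^ 2 - u ^ 4 ≤ u := by
    intro u hu
    have : 0 ≤ 1 - u + u ^ 3 := by
      rcases le_total u 1 with h | h
      · nlinarith [pow_nonneg hu 3]
      · nlinarith [mul_nonneg hu (mul_nonneg (sub_nonneg.2 h) (add_nonneg hu zero_le_one))]
    nlinarith [mul_nonneg hu this]
  have h := mul_le_mul_of_nonneg_left (hu (|s| / a) (by positivity)) ha.le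
  have e2 : |s| ^ 2 = s ^ 2 := sq_abs s
  have e4 : |s| ^ 4 = s ^ 4 := Even.pow_abs (by decide) s
  rw [div_pow, div_pow, e2, e4] at h
  have e : a * (s ^ 2 / a ^ 2 - s ^ 4 / a ^ 4) = s ^ 2 / a - s ^ 4 / a ^ 3 := by
    field_simp
  have e' : a * (|s| / a) = |s| := by field_simp
  rw [e, e'] at h
  have h' : s + |s| ≤ 2 * g := by
    rcases abs_cases s with ⟨h, _⟩ | ⟨h, _⟩ <;> linarith
  have : 2⁻¹ * s + (2⁻¹ / a * s ^ 2 + (-(2⁻¹ / a ^ 3)) * s ^ 4) =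
      2⁻¹ * (s + (s ^ 2 / a - s ^ 4 / a ^ 3)) := by ring
  rw [this]; linarith

/-! ### The lower bound -/

/-- **Proposition 1** (lower bound on the number of flexes): for every `C > 0` there are
`c > 0` and `T₀` (depending only on `C`, `N`, `q`) such that for every horizon `T ≥ T₀` and
every policy with `E[Gap(T)] ≤ C` one has `E[M] ≥ c √T`. -/
theorem flex_lower_bound (N : ℕ) (hN : 2 ≤ N) (q : ℝ) (hq0 : 0 < q) (hq1 : q ≤ 1) :
    ∀ C : ℝ, 0 < C →
      ∃ c : ℝ, 0 < c ∧ ∃ T₀ : ℕ, ∀ T : ℕ, T₀ ≤ T →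
        ∀ (dec : (Fin T → Arrival N) → Fin T → Bool)
          (ch : (Fin T → Arrival N) → Fin T → Fin N),
          (∀ xs t, (xs t).1 = true → dec xs t = true → ch xs t ∈ (xs t).2.2) →
          expec N T q (fun xs => gap (polLoads dec ch xs T) T) ≤ C →
          c * Real.sqrt T ≤ expec N T q (fun xs => (polFlexCount dec xs : ℝ)) := by
  intro C hC
  have hN' : (2 : ℝ) ≤ N := by exact_mod_cast hN
  have hinv0 : 0 < 1 / (N : ℝ) := by positivity
  have hinv : 1 / (N : ℝ) ≤ 1 / 2 := one_div_le_one_div_of_le (by norm_num) hN'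
  set v : ℝ := (1 / (N : ℝ)) * (1 - 1 / (N : ℝ)) with hv
  have hvpos : 0 < v := mul_pos hinv0 (by linarith)
  have hv1 : v ≤ 1 := by rw [hv]; nlinarith
  -- With `a = K √T`, the value `K² = 6 / v` makes the fourth-moment term half the variance term.
  set K : ℝ := Real.sqrt (6 / v) with hK
  have hKpos : 0 < K := Real.sqrt_pos.2 (by positivity)
  have hK2 : K ^ 2 = 6 / v := Real.sq_sqrt (by positivity)
  have hc : 0 < v / (8 * K) := by positivity
  set c : ℝ := v / (8 * K) with hcdef
  refine ⟨c, hc, ⌈(C / c) ^ 2⌉₊ + 1, ?_⟩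
  intro T hT dec ch _ hgap
  have hT1 : (1 : ℝ) ≤ T := by exact_mod_cast (by omega : 1 ≤ T)
  have hTC : (C / c) ^ 2 ≤ T :=
    (Nat.le_ceil _).trans (by exact_mod_cast (by omega : ⌈(C / c) ^ 2⌉₊ ≤ T))
  have hCle : C ≤ c * Real.sqrt T := by
    have := Real.le_sqrt_of_sq_le hTC
    rw [div_le_iff₀ hc] at this
    linarith
  have hrpos : 0 < Real.sqrt T := Real.sqrt_pos.2 (by linarith)
  have hr2 : Real.sqrt T ^ 2 = T := Real.sq_sqrt (by linarith)
  set r : ℝ := Real.sqrt T with hr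
  have ha : 0 < K * r := mul_pos hKpos hrpos
  let i₀ : Fin N := ⟨0, by omega⟩
  obtain ⟨m0, m1, m2, m4⟩ := centred_moments N hN q hq0 hq1 i₀
  obtain ⟨-, e1, e2, e4⟩ :=
    seqE_moments (arrivalProb N q) (centred i₀) v m0 m1 m2 hvpos.le hv1 m4 T
  have hmono := seqE_mono (arrivalProb N q) (arrivalProb_nonneg N q hq0 hq1) T
    (fun xs => poly_le_of_le ha (centred_le_gap_add_flex dec ch xs i₀)
      (gap_add_flex_nonneg hN dec ch xs))
  rw [seqE_add, seqE_const_mul, seqE_add, seqE_const_mul, seqE_const_mul, seqE_add, e1, e2]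
    at hmono
  have hgap' : seqE (arrivalProb N q) T (fun xs => gap (polLoads dec ch xs T) T) ≤ C := hgap
  change c * r ≤ seqE (arrivalProb N q) T (fun xs => (polFlexCount dec xs : ℝ))
  have h4 := mul_le_mul_of_nonneg_left e4 (by positivity : 0 ≤ 2⁻¹ / (K * r) ^ 3)
  have hval : 2⁻¹ / (K * r) * (v * T) - 2⁻¹ / (K * r) ^ 3 * (3 * (T : ℝ) ^ 2) = 2 * (c * r) := by
    have hv6 : v = 6 / K ^ 2 := by rw [hK2]; field_simp
    rw [hcdef, hv6, ← hr2]
    field_simp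
    ring
  linarith
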